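/- For every integer n ≥ 5 there exists a finite group G of order 3 · 2^n together with elements ρ0, ρ1, ρ2 that generate G, such that ρ0, ρ1, ρ2 and ρ0ρ2 have order exactly 2, ρ0ρ1 and ρ1ρ2 each have order exactly 6, and the triple (ρ0, ρ1, ρ2) satisfies the intersection property in G. -/

import Mathlib

/-- The intersection property for a triple of elements. -/
def InterProp {G : Type*} [Group G] (ρ : Fin 3 → G) : Prop :=
  ∀ I J : Set (Fin 3),
    Subgroup.closure (ρ '' I) ⊓ Subgroup.closure (ρ '' J) =
      Subgroup.closure (ρ '' (I ∩ J))

/-- `(G, (ρ0, ρ1, ρ2))` is a string C-group of order `3 · 2^n` with Schläfli type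
`{6, 6}`. -/
def IsType66StringC (n : ℕ) (G : Type) [Group G] (ρ0 ρ1 ρ2 : G) : Prop :=
  Nat.card G = 3 * 2 ^ n ∧
  Subgroup.closure {ρ0, ρ1, ρ2} = ⊤ ∧
  orderOf ρ0 = 2 ∧ orderOf ρ1 = 2 ∧ orderOf ρ2 = 2 ∧
  orderOf (ρ0 * ρ2) = 2 ∧
  orderOf (ρ0 * ρ1) = 6 ∧ orderOf (ρ1 * ρ2) = 6 ∧
  InterProp ![ρ0, ρ1, ρ2]

section StringC

variable {G H : Type*} [Group G] [Group H]

theorem exists_zpow_mul_pow_of_mem_closure_pair {a b x : G} (ha : a * a = 1) (hb : b * b = 1)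
    (hx : x ∈ Subgroup.closure {a, b}) : ∃ (i : ℤ) (e : Fin 2), x = (a * b) ^ i * a ^ e.val := by
  have hai : a⁻¹ = a := inv_eq_of_mul_eq_one_left ha
  have hbi : b⁻¹ = b := inv_eq_of_mul_eq_one_left hb
  have step : ∀ y ∈ ({a, b} : Set G), ∀ x : G,
      (∃ (i : ℤ) (e : Fin 2), x = (a * b) ^ i * a ^ e.val) →
      ∃ (i : ℤ) (e : Fin 2), x * y = (a * b) ^ i * a ^ e.val := by
    have hab : (a * b)⁻¹ * a = b := by rw [mul_inv_rev, hai, hbi, mul_assoc, ha, mul_one]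
    rintro y (rfl | rfl) x ⟨i, e, rfl⟩ <;> fin_cases e
    · exact ⟨i, 1, by simp⟩
    · exact ⟨i, 0, by simp [mul_assoc, ha]⟩
    · exact ⟨i - 1, 1, by simp [zpow_sub_one, mul_assoc, hai, hbi, ha]⟩
    · exact ⟨i + 1, 0, by simp [zpow_add_one, mul_assoc]⟩
  induction hx using Subgroup.closure_induction_right with
  | one => exact ⟨0, 0, by simp⟩
  | mul_right x _ y hy ih => exact step y hy x ih
  | mul_inv_cancel x _ y hy ih =>
    have : y⁻¹ = y := by rcases hy with rfl | rfl <;> assumption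
    rw [this]; exact step y hy x ih

theorem exists_pow_mul_pow_of_mem_closure_pair {a b x : G} {k : ℕ} [NeZero k] (ha : a * a = 1)
    (hb : b * b = 1) (hk : (a * b) ^ k = 1) (hx : x ∈ Subgroup.closure {a, b}) :
    ∃ (i : Fin k) (e : Fin 2), x = (a * b) ^ i.val * a ^ e.val := by
  obtain ⟨i, e, rfl⟩ := exists_zpow_mul_pow_of_mem_closure_pair ha hb hx
  have hk0 : (0 : ℤ) < k := by exact_mod_cast NeZero.pos k
  have h0 := Int.emod_nonneg i hk0.ne'
  have h1 := Int.emod_lt_of_pos i hk0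
  refine ⟨⟨(i % k).toNat, by omega⟩, e, ?_⟩
  rw [← zpow_natCast (a * b) (i % k).toNat, Int.toNat_of_nonneg h0]
  congr 1
  conv_lhs => rw [← Int.emod_add_mul_ediv i k, zpow_add, zpow_mul, zpow_natCast, hk, one_zpow,
    mul_one]

/-- Two dihedral subgroups sharing the involution `a` meet in `⟨a⟩` as soon as their images
under a homomorphism provide no further coincidences. -/
theorem closure_pair_inf_le (f : G →* H) {a b c : G} {k l : ℕ} [NeZero k] [NeZero l]
    (ha : a * a = 1) (hb : b * b = 1) (hc : c * c = 1)
    (hk : (a * b) ^ k = 1) (hl : (a * c) ^ l = 1)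
    (hf : ∀ (i : Fin k) (j : Fin l) (d e : Fin 2),
      (f a * f b) ^ i.val * f a ^ d.val = (f a * f c) ^ j.val * f a ^ e.val → i = 0) :
    Subgroup.closure {a, b} ⊓ Subgroup.closure {a, c} ≤ Subgroup.closure {a} := by
  rintro x ⟨h1, h2⟩
  obtain ⟨i, d, rfl⟩ := exists_pow_mul_pow_of_mem_closure_pair ha hb hk h1
  obtain ⟨j, e, he⟩ := exists_pow_mul_pow_of_mem_closure_pair ha hc hl h2
  obtain rfl : i = 0 := hf i j d e (by simpa using congrArg f he)
  simpa using pow_mem (Subgroup.mem_closure_singleton_self a) _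

theorem closure_singleton_inf_eq_bot {a b : G} (ha : a * a = 1) (hb : b * b = 1) (hab : a ≠ b) :
    Subgroup.closure {a} ⊓ Subgroup.closure {b} = ⊥ := by
  have key : ∀ {y x : G}, y * y = 1 → x ∈ Subgroup.closure {y} → x = 1 ∨ x = y := by
    intro y x hy hx
    rw [← Set.pair_eq_singleton] at hx
    obtain ⟨i, e, rfl⟩ := exists_zpow_mul_pow_of_mem_closure_pair hy hy hx
    fin_cases e <;> simp [hy]
  refine eq_bot_iff.2 ?_
  rintro x ⟨h1, h2⟩
  rcases key ha h1 with rfl | rfl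
  · exact one_mem _
  · rcases key hb h2 with rfl | rfl
    · exact one_mem _
    · exact absurd rfl hab

/-- The intersection property follows from its instances for the maximal parabolic subgroups. -/
theorem interProp_of_compl_singleton {ρ : Fin 3 → G}
    (htop : Subgroup.closure (ρ '' Set.univ) = ⊤)
    (hpair : ∀ i j, i ≠ j → Subgroup.closure (ρ '' {i}ᶜ) ⊓ Subgroup.closure (ρ '' {j}ᶜ) ≤
      Subgroup.closure (ρ '' {i, j}ᶜ))
    (hbot : ⨅ i, Subgroup.closure (ρ '' {i}ᶜ) ≤ ⊥) : InterProp ρ := by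
  have key : ∀ I : Set (Fin 3),
      Subgroup.closure (ρ '' I) = ⨅ i ∈ Iᶜ, Subgroup.closure (ρ '' {i}ᶜ) := by
    intro I
    refine le_antisymm (le_iInf₂ fun i hi => Subgroup.closure_mono (Set.image_mono ?_)) ?_
    · exact Set.subset_compl_singleton_iff.2 hi
    · have hK : ∀ K : Finset (Fin 3), K = ∅ ∨ (∃ i, K = {i}) ∨ (∃ i j, i ≠ j ∧ K = {i, j}) ∨
          K = Finset.univ := by decide
      obtain ⟨K, hK'⟩ : ∃ K : Finset (Fin 3), (K : Set (Fin 3)) = Iᶜ :=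
        ⟨(Iᶜ).toFinite.toFinset, by simp⟩
      obtain rfl : (K : Set (Fin 3))ᶜ = I := by rw [hK', compl_compl]
      rw [compl_compl]
      rcases hK K with rfl | ⟨i, rfl⟩ | ⟨i, j, hij, rfl⟩ | rfl
      · simpa using htop
      · simp
      · simpa [iInf_or, iInf_inf_eq] using hpair i j hij
      · simpa using hbot
  intro I J
  rw [key I, key J, key (I ∩ J), Set.compl_inter, iInf_union]

theorem interProp_of_pairs {a b c : G} (ha : a * a = 1) (hb : b * b = 1) (hne : a ≠ b)
    (htop : Subgroup.closure {a, b, c} = ⊤)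
    (h0 : Subgroup.closure {a, b} ⊓ Subgroup.closure {a, c} ≤ Subgroup.closure {a})
    (h1 : Subgroup.closure {b, a} ⊓ Subgroup.closure {b, c} ≤ Subgroup.closure {b})
    (h2 : Subgroup.closure {c, a} ⊓ Subgroup.closure {c, b} ≤ Subgroup.closure {c}) :
    InterProp ![a, b, c] := by
  have i0 : ![a, b, c] '' {0}ᶜ = {b, c} := by
    rw [show ({0}ᶜ : Set (Fin 3)) = {1, 2} by ext i; fin_cases i <;> simp]; simp [Set.image_pair]
  have i1 : ![a, b, c] '' {1}ᶜ = {a, c} := by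
    rw [show ({1}ᶜ : Set (Fin 3)) = {0, 2} by ext i; fin_cases i <;> simp]; simp [Set.image_pair]
  have i2 : ![a, b, c] '' {2}ᶜ = {a, b} := by
    rw [show ({2}ᶜ : Set (Fin 3)) = {0, 1} by ext i; fin_cases i <;> simp]; simp [Set.image_pair]
  have j0 : ![a, b, c] '' {1, 2}ᶜ = {a} := by
    rw [show ({1, 2}ᶜ : Set (Fin 3)) = {0} by ext i; fin_cases i <;> simp]; simp
  have j1 : ![a, b, c] '' {0, 2}ᶜ = {b} := by
    rw [show ({0, 2}ᶜ : Set (Fin 3)) = {1} by ext i; fin_cases i <;> simp]; simp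
  have j2 : ![a, b, c] '' {0, 1}ᶜ = {c} := by
    rw [show ({0, 1}ᶜ : Set (Fin 3)) = {2} by ext i; fin_cases i <;> simp]; simp
  rw [Set.pair_comm b a] at h1
  rw [Set.pair_comm c a, Set.pair_comm c b] at h2
  refine interProp_of_compl_singleton ?_ ?_ ?_
  · rw [Set.image_univ, ← htop]
    congr 1
    ext x
    simp only [Matrix.range_cons, Matrix.range_empty, Set.union_empty, Set.singleton_union]
  · intro i j hij
    wlog hlt : i < j generalizing i j
    · rw [inf_comm, Set.pair_comm]
      exact this j i hij.symm (lt_of_le_of_ne (not_lt.1 hlt) hij.symm)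
    obtain ⟨rfl, rfl⟩ | ⟨rfl, rfl⟩ | ⟨rfl, rfl⟩ :
        (i = 0 ∧ j = 1) ∨ (i = 0 ∧ j = 2) ∨ (i = 1 ∧ j = 2) := by omega
    · rw [i0, i1, j2, inf_comm]; exact h2
    · rw [i0, i2, j1, inf_comm]; exact h1
    · rw [i1, i2, j0, inf_comm]; exact h0
  · rw [← closure_singleton_inf_eq_bot ha hb hne]
    refine le_inf (le_trans (le_inf (iInf_le _ 2) (iInf_le _ 1)) ?_)
      (le_trans (le_inf (iInf_le _ 2) (iInf_le _ 0)) ?_)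
    · rw [i2, i1]; exact h0
    · rw [i2, i0]; exact h1

end StringC

open Equiv

section Form

/-- The parity of a permutation of three points, as an element of `ZMod 2`. -/
def parity (σ : Perm (Fin 3)) : ZMod 2 := if Perm.sign σ = 1 then 0 else 1

/-- The cyclic bilinear form `∑ uᵢ vᵢ₊₁` on `𝔽₂³`. -/
def cyclicForm (u v : Fin 3 → ZMod 2) : ZMod 2 := u 0 * v 1 + u 1 * v 2 + u 2 * v 0

theorem parity_mul (σ τ : Perm (Fin 3)) : parity (σ * τ) = parity σ + parity τ := by
  decide +revert

theorem cyclicForm_self_comp (σ : Perm (Fin 3)) (u : Fin 3 → ZMod 2) :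
    cyclicForm (u ∘ σ) (u ∘ σ) = cyclicForm u u := by
  decide +revert

theorem cyclicForm_comp (σ : Perm (Fin 3)) (u v : Fin 3 → ZMod 2) :
    cyclicForm (u ∘ σ) (v ∘ σ) =
      cyclicForm u v + parity σ * (cyclicForm u v + cyclicForm v u) := by
  decide +revert

theorem cyclicForm_add_left (u v w : Fin 3 → ZMod 2) :
    cyclicForm (u + v) w = cyclicForm u w + cyclicForm v w := by
  simp only [cyclicForm, Pi.add_apply]; ring

theorem cyclicForm_add_right (u v w : Fin 3 → ZMod 2) :
    cyclicForm u (v + w) = cyclicForm u v + cyclicForm u w := by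
  simp only [cyclicForm, Pi.add_apply]; ring

/-- The scalar `(-1) ^ s`. -/
def negPow (m : ℕ) (s : ZMod 2) : ZMod m := if s = 0 then 1 else -1

theorem negPow_zero (m : ℕ) : negPow m 0 = 1 := rfl

theorem negPow_add (m : ℕ) (s t : ZMod 2) : negPow m (s + t) = negPow m s * negPow m t := by
  have h : ∀ a : ZMod 2, a = 0 ∨ a = 1 := by decide
  have h2 : (1 + 1 : ZMod 2) = 0 := rfl
  rcases h s with rfl | rfl <;> rcases h t with rfl | rfl <;> simp [negPow, h2]

/-- Reduction modulo two of a vector over `ℤ / 2k`. -/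
def redTwo {k : ℕ} (x : Fin 3 → ZMod (2 * k)) : Fin 3 → ZMod 2 :=
  fun i => ZMod.castHom (Dvd.intro k rfl) (ZMod 2) (x i)

variable {k : ℕ}

theorem redTwo_add (x y : Fin 3 → ZMod (2 * k)) : redTwo (x + y) = redTwo x + redTwo y := by
  ext i; simp only [redTwo, Pi.add_apply, map_add]

theorem redTwo_negPow_smul (s : ZMod 2) (x : Fin 3 → ZMod (2 * k)) :
    redTwo (negPow (2 * k) s • x) = redTwo x := by
  ext i
  have h : ZMod.castHom (Dvd.intro k rfl) (ZMod 2) (negPow (2 * k) s) = 1 := by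
    unfold negPow; split_ifs
    · exact map_one _
    · rw [map_neg, map_one]; rfl
  simp only [redTwo, Pi.smul_apply, smul_eq_mul, map_mul, h, one_mul]

theorem redTwo_comp (x : Fin 3 → ZMod (2 * k)) (σ : Perm (Fin 3)) :
    redTwo (x ∘ σ) = redTwo x ∘ σ := rfl

end Form

/-- The central extension, along `κ`, of the group of maps `v ↦ (-1) ^ s σ v + x` of
`(ℤ / 2k)³` times a group of order two with coordinate `t`. -/
@[ext]
structure TwistedAffine (k : ℕ) {C : Type} [AddCommGroup C] (κ : ZMod 2 →+ C) where
  vec : Fin 3 → ZMod (2 * k)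
  perm : Perm (Fin 3)
  s : ZMod 2
  t : ZMod 2
  c : C

namespace TwistedAffine

variable {k : ℕ}

/-- The `ZMod 2`-valued cocycle defining the central extension. -/
def cocycle (x : Fin 3 → ZMod 2) (σ : Perm (Fin 3)) (t : ZMod 2)
    (y : Fin 3 → ZMod 2) (s : ZMod 2) : ZMod 2 :=
  cyclicForm x (y ∘ σ.symm) + parity σ * cyclicForm y y + t * s

theorem cocycle_assoc (x y z : Fin 3 → ZMod 2) (σ τ : Perm (Fin 3)) (t t' s' s'' : ZMod 2) :
    cocycle x σ t y s' + cocycle (x + y ∘ σ.symm) (σ * τ) (t + t') z s'' =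
      cocycle y τ t' z s'' + cocycle x σ t (y + z ∘ τ.symm) (s' + s'') := by
  have hp : parity σ.symm = parity σ := by decide +revert
  have h1 := cyclicForm_comp σ.symm y (z ∘ τ.symm)
  have h2 := cyclicForm_self_comp τ.symm z
  have h3 : z ∘ (σ * τ).symm = (z ∘ τ.symm) ∘ σ.symm := rfl
  have h4 : (y + z ∘ τ.symm) ∘ σ.symm = y ∘ σ.symm + (z ∘ τ.symm) ∘ σ.symm := rfl
  simp only [cocycle, h3, h4, cyclicForm_add_left, cyclicForm_add_right, h1, h2, hp, parity_mul]
  ring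

variable {C : Type} [AddCommGroup C] {κ : ZMod 2 →+ C}

instance [DecidableEq C] : DecidableEq (TwistedAffine k κ) := fun _ _ =>
  decidable_of_iff _ TwistedAffine.ext_iff.symm

instance : Mul (TwistedAffine k κ) where
  mul g h :=
    { vec := g.vec + negPow (2 * k) g.s • (h.vec ∘ g.perm.symm)
      perm := g.perm * h.perm
      s := g.s + h.s
      t := g.t + h.t
      c := g.c + h.c + κ (cocycle (redTwo g.vec) g.perm g.t (redTwo h.vec) h.s) }

instance : One (TwistedAffine k κ) := ⟨⟨0, 1, 0, 0, 0⟩⟩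

instance : Inv (TwistedAffine k κ) where
  inv g :=
    { vec := -(negPow (2 * k) g.s • (g.vec ∘ g.perm))
      perm := g.perm⁻¹
      s := g.s
      t := g.t
      c := -g.c - κ (cocycle (redTwo (-(negPow (2 * k) g.s • (g.vec ∘ g.perm)))) g.perm⁻¹ g.t
        (redTwo g.vec) g.s) }

theorem mul_def (g h : TwistedAffine k κ) : g * h =
    { vec := g.vec + negPow (2 * k) g.s • (h.vec ∘ g.perm.symm)
      perm := g.perm * h.perm
      s := g.s + h.s
      t := g.t + h.t
      c := g.c + h.c + κ (cocycle (redTwo g.vec) g.perm g.t (redTwo h.vec) h.s) } := rfl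

theorem one_def : (1 : TwistedAffine k κ) = ⟨0, 1, 0, 0, 0⟩ := rfl

theorem redTwo_zero : redTwo (0 : Fin 3 → ZMod (2 * k)) = 0 := by
  ext i; exact map_zero _

instance : Group (TwistedAffine k κ) := Group.ofLeftAxioms
  (by
    intro f g h
    have key := congrArg κ (cocycle_assoc (redTwo f.vec) (redTwo g.vec) (redTwo h.vec)
      f.perm g.perm f.t g.t g.s h.s)
    rw [map_add, map_add] at key
    ext i
    · simp only [mul_def, Pi.add_apply, Pi.smul_apply, smul_eq_mul, Function.comp_apply,
        negPow_add]
      change _ + _ * h.vec (g.perm.symm (f.perm.symm i)) = _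
      ring
    · rfl
    · exact add_assoc _ _ _
    · exact add_assoc _ _ _
    · simp only [mul_def, redTwo_add, redTwo_negPow_smul, redTwo_comp]
      linear_combination (norm := abel) key)
  (by
    intro g
    ext i
    · simp [mul_def, one_def, negPow_zero, ← Perm.inv_def]
    · simp [mul_def, one_def]
    · simp [mul_def, one_def]
    · simp [mul_def, one_def]
    · simp [mul_def, one_def, redTwo_zero, cocycle, cyclicForm, parity])
  (by
    intro g
    have h2 : ∀ a : ZMod 2, a + a = 0 := by decide
    ext i
    · change -(negPow (2 * k) g.s * _) + negPow (2 * k) g.s * g.vec (g.perm i) = 0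
      simp
    · exact congrArg (fun σ : Perm (Fin 3) => (σ i : ℕ)) (inv_mul_cancel g.perm)
    · exact h2 _
    · exact h2 _
    · change -g.c - κ _ + g.c + κ _ = 0
      rw [sub_add_eq_add_sub, neg_add_cancel, zero_sub]
      exact neg_add_cancel _)


/-- Reduction of a twisted affine map to the quotient of the `k = 1` group by its centre. -/
def toBase : TwistedAffine k κ →* TwistedAffine 1 (0 : ZMod 2 →+ Unit) where
  toFun g := ⟨redTwo g.vec, g.perm, g.s, g.t, 0⟩
  map_one' := by rw [one_def, one_def, redTwo_zero]
  map_mul' g h := by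
    simp only [mul_def, redTwo_add, redTwo_negPow_smul, redTwo_comp]
    ext i
    · have h1 : negPow 2 g.s = 1 := by generalize g.s = s; revert s; decide
      change _ = redTwo g.vec i + negPow 2 g.s * (redTwo h.vec) (g.perm.symm i)
      rw [h1, one_mul]; rfl
    all_goals rfl

/-- The first distinguished generator. -/
def gen0 : TwistedAffine k κ := ⟨0, swap 0 1, 1, 0, 0⟩

/-- The second distinguished generator. -/
def gen1 : TwistedAffine k κ := ⟨0, swap 1 2, 0, 0, 0⟩

/-- The third distinguished generator. -/
def gen2 : TwistedAffine k κ := ⟨![1, -1, 0], swap 0 1, 0, 1, 0⟩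

theorem toBase_gen0 : toBase (gen0 : TwistedAffine k κ) = gen0 := by
  simp only [gen0, toBase, MonoidHom.coe_mk, OneHom.coe_mk, redTwo_zero]

theorem toBase_gen1 : toBase (gen1 : TwistedAffine k κ) = gen1 := by
  simp only [gen1, toBase, MonoidHom.coe_mk, OneHom.coe_mk, redTwo_zero]

theorem redTwo_root : redTwo (![1, -1, 0] : Fin 3 → ZMod (2 * k)) = ![1, 1, 0] := by
  ext i; fin_cases i
  · exact map_one _
  · simp [redTwo]
  · exact map_zero _

theorem toBase_gen2 : toBase (gen2 : TwistedAffine k κ) = gen2 := by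
  simp only [gen2, toBase, MonoidHom.coe_mk, OneHom.coe_mk, redTwo_root]; decide


theorem gen0_mul_self : (gen0 * gen0 : TwistedAffine k κ) = 1 := by
  ext i
  · simp [gen0, mul_def, one_def]
  · simp [gen0, mul_def, one_def]
  · exact CharTwo.add_self_eq_zero _
  · rfl
  · simp [gen0, mul_def, one_def, redTwo_zero, cocycle, cyclicForm]

theorem gen1_mul_self : (gen1 * gen1 : TwistedAffine k κ) = 1 := by
  ext i
  · simp [gen1, mul_def, one_def]
  · simp [gen1, mul_def, one_def]
  · rfl
  · rfl
  · simp [gen1, mul_def, one_def, redTwo_zero, cocycle, cyclicForm]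

theorem gen2_mul_self : (gen2 * gen2 : TwistedAffine k κ) = 1 := by
  ext i
  · fin_cases i <;> simp [gen2, mul_def, one_def, negPow]
  · simp [gen2, mul_def, one_def]
  · rfl
  · exact CharTwo.add_self_eq_zero _
  · simp only [gen2, mul_def, one_def, redTwo_root]
    rw [show cocycle ![1, 1, 0] (swap 0 1) 1 ![1, 1, 0] 0 = 0 by decide, map_zero]; simp

theorem gen0_mul_gen2 : (gen0 * gen2 : TwistedAffine k κ) = ⟨![1, -1, 0], 1, 1, 1, κ 1⟩ := by
  simp only [gen0, gen2, mul_def, redTwo_root, redTwo_zero]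
  rw [show cocycle 0 (swap 0 1) 0 ![1, 1, 0] 0 = 1 by decide]
  ext i
  · fin_cases i <;> simp [negPow]
  · simp
  · rfl
  · rfl
  · simp

theorem gen0_mul_gen1 : (gen0 * gen1 : TwistedAffine k κ) = ⟨0, swap 0 1 * swap 1 2, 1, 0, 0⟩ := by
  simp only [gen0, gen1, mul_def, redTwo_zero]
  rw [show cocycle 0 (swap 0 1) 0 0 0 = 0 by decide]
  ext i
  · simp
  · simp
  · rfl
  · rfl
  · simp

theorem gen1_mul_gen2 : (gen1 * gen2 : TwistedAffine k κ) =
    ⟨![1, 0, -1], swap 1 2 * swap 0 1, 0, 1, κ 1⟩ := by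
  simp only [gen1, gen2, mul_def, redTwo_root, redTwo_zero]
  rw [show cocycle 0 (swap 1 2) 0 ![1, 1, 0] 0 = 1 by decide]
  ext i
  · fin_cases i <;> (simp [negPow]; try rfl)
  · simp
  · rfl
  · rfl
  · simp

theorem gen0_mul_gen2_sq : (gen0 * gen2 : TwistedAffine k κ) ^ 2 = 1 := by
  rw [gen0_mul_gen2, sq]
  simp only [mul_def, redTwo_root]
  rw [show cocycle ![1, 1, 0] 1 1 ![1, 1, 0] 1 = 0 by decide]
  ext i
  · fin_cases i <;> simp [negPow, one_def, ← Perm.inv_def]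
  · simp [one_def]
  · rfl
  · rfl
  · simp [one_def, ← map_add, show (1 + 1 : ZMod 2) = 0 from rfl]

theorem gen0_mul_gen1_cube : (gen0 * gen1 : TwistedAffine k κ) ^ 3 = ⟨0, 1, 1, 0, 0⟩ := by
  rw [gen0_mul_gen1, pow_succ, sq]
  have h : ∀ σ : Perm (Fin 3), cocycle 0 σ 0 0 1 = 0 := by decide
  simp only [mul_def, smul_zero, add_zero, redTwo_zero, Pi.zero_comp, h, map_zero]
  ext i
  · rfl
  · exact congrArg (fun σ : Perm (Fin 3) => (σ i : ℕ))
      (show swap 0 1 * swap 1 2 * (swap 0 1 * swap 1 2) * (swap 0 1 * swap 1 2) = 1 by decide)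
  · rfl
  · rfl
  · rfl

theorem gen1_mul_gen2_cube :
    ∃ c, (gen1 * gen2 : TwistedAffine k κ) ^ 3 = ⟨0, 1, 0, 1, c⟩ := by
  refine ⟨((gen1 * gen2 : TwistedAffine k κ) ^ 3).c, ?_⟩
  rw [gen1_mul_gen2, pow_succ, sq]
  simp only [mul_def]
  ext i
  · have h : (swap 1 2 * swap 0 1 : Perm (Fin 3)).symm = swap 0 1 * swap 1 2 := by decide
    have h' : (swap 1 2 * swap 0 1 * (swap 1 2 * swap 0 1) : Perm (Fin 3)).symm =
      swap 1 2 * swap 0 1 := by decide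
    simp only [Pi.add_apply, Pi.smul_apply, Function.comp_apply, h, h', Perm.mul_apply]
    fin_cases i <;> simp [negPow, swap_apply_def]
  · exact congrArg (fun σ : Perm (Fin 3) => (σ i : ℕ))
      (show swap 1 2 * swap 0 1 * (swap 1 2 * swap 0 1) * (swap 1 2 * swap 0 1) = 1 by decide)
  · rfl
  · exact show (1 + 1 + 1 : ZMod 2) = 1 by decide
  · rfl

theorem gen0_mul_gen1_pow_six : (gen0 * gen1 : TwistedAffine k κ) ^ 6 = 1 := by
  rw [pow_mul _ 3 2, gen0_mul_gen1_cube, sq, mul_def]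
  simp only [redTwo_zero]
  rw [show cocycle 0 1 0 0 1 = 0 by decide]
  ext i
  · simp [one_def]
  · rfl
  · exact CharTwo.add_self_eq_zero _
  · rfl
  · simp [one_def]

theorem gen1_mul_gen2_pow_six (hκ : Function.Surjective κ) :
    (gen1 * gen2 : TwistedAffine k κ) ^ 6 = 1 := by
  obtain ⟨c, hc⟩ := gen1_mul_gen2_cube (k := k) (κ := κ)
  obtain ⟨a, rfl⟩ := hκ c
  rw [pow_mul _ 3 2, hc, sq, mul_def]
  simp only [redTwo_zero]
  rw [show cocycle 0 1 1 0 0 = 0 by decide]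
  ext i
  · simp [one_def]
  · rfl
  · rfl
  · exact CharTwo.add_self_eq_zero _
  · simp [one_def, ← map_add, CharTwo.add_self_eq_zero]

/-- The elements whose translation part has coordinate sum zero. -/
def sumZero (k : ℕ) (κ : ZMod 2 →+ C) : Subgroup (TwistedAffine k κ) where
  carrier := {g | ∑ i, g.vec i = 0}
  one_mem' := by simp [one_def]
  mul_mem' {g h} hg hh := by
    simp only [Set.mem_ofPred_eq] at *
    simp only [mul_def, Pi.add_apply, Pi.smul_apply, Function.comp_apply, Finset.sum_add_distrib,
      hg, ← Finset.smul_sum, Equiv.sum_comp g.perm.symm h.vec, hh, smul_zero, add_zero]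
  inv_mem' {g} hg := by
    simp only [Set.mem_ofPred_eq] at *
    change ∑ i, -(negPow (2 * k) g.s • g.vec (g.perm i)) = 0
    rw [Finset.sum_neg_distrib, ← Finset.smul_sum, Equiv.sum_comp g.perm g.vec, hg, smul_zero,
      neg_zero]

theorem mem_sumZero {g : TwistedAffine k κ} : g ∈ sumZero k κ ↔ ∑ i, g.vec i = 0 := Iff.rfl

/-- Coordinates on `sumZero`. -/
def sumZeroEquiv (k : ℕ) (κ : ZMod 2 →+ C) : sumZero k κ ≃
    (ZMod (2 * k) × ZMod (2 * k)) × Perm (Fin 3) × ZMod 2 × ZMod 2 × C where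
  toFun g := ⟨(g.1.vec 0, g.1.vec 1), g.1.perm, g.1.s, g.1.t, g.1.c⟩
  invFun p := ⟨⟨![p.1.1, p.1.2, -p.1.1 - p.1.2], p.2.1, p.2.2.1, p.2.2.2.1, p.2.2.2.2⟩, by
    simp [mem_sumZero, Fin.sum_univ_three]⟩
  left_inv := by
    rintro ⟨g, hg⟩
    rw [mem_sumZero, Fin.sum_univ_three] at hg
    ext i
    · fin_cases i
      · rfl
      · rfl
      · change -g.vec 0 - g.vec 1 = g.vec 2
        linear_combination -hg
    all_goals rfl
  right_inv p := rfl

theorem card_sumZero (k : ℕ) (κ : ZMod 2 →+ C) :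
    Nat.card (sumZero k κ) = 96 * k ^ 2 * Nat.card C := by
  rw [Nat.card_congr (sumZeroEquiv k κ)]
  simp only [Nat.card_prod, Nat.card_zmod, Nat.card_perm, Nat.card_eq_fintype_card (α := Fin 3),
    Fintype.card_fin, Nat.factorial]
  ring

/-- The standard copy of the symmetric group. -/
def ofPerm : Perm (Fin 3) →* TwistedAffine k κ where
  toFun σ := ⟨0, σ, 0, 0, 0⟩
  map_one' := rfl
  map_mul' σ τ := by
    have h : ∀ σ : Perm (Fin 3), cocycle 0 σ 0 0 0 = 0 := by decide
    simp [mul_def, redTwo_zero, h]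

theorem mul_center (g : TwistedAffine k κ) (c : C) :
    g * ⟨0, 1, 0, 0, c⟩ = ⟨g.vec, g.perm, g.s, g.t, g.c + c⟩ := by
  have h : ∀ u σ t, cocycle u σ t 0 0 = 0 := by intros; simp [cocycle, cyclicForm]
  simp [mul_def, redTwo_zero, h]

theorem closure_gens (hκ : Function.Surjective κ) :
    Subgroup.closure {gen0, gen1, gen2} = sumZero k κ := by
  apply le_antisymm
  · rw [Subgroup.closure_le]
    rintro g (rfl | rfl | rfl) <;> simp [mem_sumZero, gen0, gen1, gen2, Fin.sum_univ_three]
  set L : Subgroup (TwistedAffine k κ) := Subgroup.closure {gen0, gen1, gen2} with hL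
  have m0 : gen0 ∈ L := Subgroup.subset_closure (by simp)
  have m1 : gen1 ∈ L := Subgroup.subset_closure (by simp)
  have m2 : gen2 ∈ L := Subgroup.subset_closure (by simp)
  have mz : (⟨0, 1, 1, 0, 0⟩ : TwistedAffine k κ) ∈ L :=
    gen0_mul_gen1_cube (k := k) (κ := κ) ▸ pow_mem (mul_mem m0 m1) 3
  obtain ⟨c, hc⟩ := gen1_mul_gen2_cube (k := k) (κ := κ)
  have mw : (⟨0, 1, 0, 1, c⟩ : TwistedAffine k κ) ∈ L := hc ▸ pow_mem (mul_mem m1 m2) 3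
  have mone : (⟨0, 1, 0, 0, κ 1⟩ : TwistedAffine k κ) ∈ L := by
    refine (Subgroup.mul_mem_cancel_left L (mul_mem mz mw)).1 ?_
    convert mul_mem mw mz using 1
    rw [mul_center]
    simp only [mul_def, redTwo_zero, show cocycle 0 1 0 0 0 = 0 by decide,
      show cocycle 0 1 1 0 1 = 1 by decide]
    simp
  have mcen : ∀ d : C, (⟨0, 1, 0, 0, d⟩ : TwistedAffine k κ) ∈ L := by
    intro d
    obtain ⟨a, rfl⟩ := hκ d
    obtain rfl | rfl : a = 0 ∨ a = 1 := by decide +revert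
    · rw [map_zero]; exact one_mem L
    · exact mone
  have mcongr : ∀ {g h : TwistedAffine k κ}, g ∈ L → g.vec = h.vec → g.perm = h.perm →
      g.s = h.s → g.t = h.t → h ∈ L := by
    intro g h hg h1 h2 h3 h4
    have := mul_mem hg (mcen (h.c - g.c))
    rw [mul_center] at this
    convert this using 1
    ext1 <;> simp [*]
  have mperm : ∀ σ : Perm (Fin 3), ofPerm σ ∈ L := by
    have ma : ofPerm (swap 0 1) ∈ L := by
      refine mcongr (mul_mem m0 mz) ?_ ?_ ?_ ?_
      · simp [gen0, ofPerm, mul_def]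
      · rfl
      · exact CharTwo.add_self_eq_zero _
      · rfl
    have mb : ofPerm (swap 1 2) ∈ L := m1
    have hσ : ∀ σ : Perm (Fin 3), σ = 1 ∨ σ = swap 0 1 ∨ σ = swap 1 2 ∨ σ = swap 0 1 * swap 1 2 ∨
        σ = swap 1 2 * swap 0 1 ∨ σ = swap 0 1 * (swap 1 2 * swap 0 1) := by decide
    intro σ
    rcases hσ σ with rfl | rfl | rfl | rfl | rfl | rfl <;> try simp only [map_one, map_mul]
    · exact one_mem L
    · exact ma
    · exact mb
    · exact mul_mem ma mb
    · exact mul_mem mb ma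
    · exact mul_mem ma (mul_mem mb ma)
  let N : AddSubgroup (Fin 3 → ZMod (2 * k)) :=
    { carrier := {x | (⟨x, 1, 0, 0, 0⟩ : TwistedAffine k κ) ∈ L}
      zero_mem' := one_mem L
      add_mem' := fun {x y} hx hy => by
        refine mcongr (mul_mem hx hy) ?_ rfl rfl rfl
        ext i; simp [mul_def, negPow_zero, ← Perm.inv_def]
      neg_mem' := fun {x} hx => by
        refine mcongr (inv_mem hx) ?_ rfl rfl rfl
        ext i
        change -(negPow (2 * k) 0 * x i) = -x i
        rw [negPow_zero, one_mul] }
  have n0 : ![1, -1, 0] ∈ N := by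
    refine mcongr (mul_mem (mul_mem m2 (mperm (swap 0 1))) mw) ?_ ?_ rfl ?_
    · simp [gen2, ofPerm, mul_def]
    · exact (mul_one _).trans (swap_mul_self _ _)
    · exact CharTwo.add_self_eq_zero _
  have n1 : ![0, 1, -1] ∈ N := by
    let σ : Perm (Fin 3) := swap 0 1 * swap 1 2
    refine mcongr (mul_mem (mul_mem (mperm σ) n0) (mperm σ⁻¹)) ?_ ?_ rfl rfl
    · have hs : σ.symm = swap 1 2 * swap 0 1 := by decide
      ext i
      fin_cases i <;> simp [ofPerm, mul_def, negPow_zero, hs, swap_apply_def]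
    · simp [mul_def, ofPerm]
  have nsmul : ∀ (a : ZMod (2 * k)) {x}, x ∈ N → a • x ∈ N := by
    intro a x hx
    obtain ⟨b, rfl⟩ := ZMod.intCast_surjective a
    rw [Int.cast_smul_eq_zsmul]
    exact zsmul_mem hx b
  rintro g hg
  rw [mem_sumZero, Fin.sum_univ_three] at hg
  have mv : (⟨g.vec, 1, 0, 0, 0⟩ : TwistedAffine k κ) ∈ L := by
    change g.vec ∈ N
    convert add_mem (nsmul (g.vec 0) n0) (nsmul (g.vec 0 + g.vec 1) n1) using 1
    ext i
    fin_cases i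
    · simp
    · simp
    · simp; linear_combination hg
  have mst : ∀ s t : ZMod 2, (⟨0, 1, s, t, 0⟩ : TwistedAffine k κ) ∈ L := by
    have h : ∀ a : ZMod 2, a = 0 ∨ a = 1 := by decide
    intro s t
    rcases h s with rfl | rfl <;> rcases h t with rfl | rfl
    · exact one_mem L
    · exact mcongr mw rfl rfl rfl rfl
    · exact mz
    · refine mcongr (mul_mem mz mw) ?_ rfl rfl rfl
      simp [mul_def]
  refine mcongr (mul_mem (mul_mem mv (mperm g.perm)) (mst g.s g.t)) ?_ ?_ ?_ ?_ <;>
    simp [mul_def, ofPerm]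

/-- The group `sumZero` with its generators is a string C-group of type `{6, 6}`. -/
theorem exists_isType66StringC {n : ℕ} (hκ : Function.Surjective κ)
    (hn : 96 * k ^ 2 * Nat.card C = 3 * 2 ^ n) :
    ∃ (G : Type) (inst : Group G) (ρ0 ρ1 ρ2 : G),
      Finite G ∧ @IsType66StringC n G inst ρ0 ρ1 ρ2 := by
  have hmem : ∀ x ∈ ({gen0, gen1, gen2} : Set (TwistedAffine k κ)), x ∈ sumZero k κ :=
    fun x hx => closure_gens hκ ▸ Subgroup.subset_closure hx
  let r0 : sumZero k κ := ⟨gen0, hmem _ (by simp)⟩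
  let r1 : sumZero k κ := ⟨gen1, hmem _ (by simp)⟩
  let r2 : sumZero k κ := ⟨gen2, hmem _ (by simp)⟩
  let f : sumZero k κ →* TwistedAffine 1 (0 : ZMod 2 →+ Unit) := toBase.comp (sumZero k κ).subtype
  have f0 : f r0 = gen0 := toBase_gen0
  have f1 : f r1 = gen1 := toBase_gen1
  have f2 : f r2 = gen2 := toBase_gen2
  have q0 : r0 * r0 = 1 := Subtype.ext gen0_mul_self
  have q1 : r1 * r1 = 1 := Subtype.ext gen1_mul_self
  have q2 : r2 * r2 = 1 := Subtype.ext gen2_mul_self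
  have p02 : (r0 * r2) ^ 2 = 1 := Subtype.ext gen0_mul_gen2_sq
  have p01 : (r0 * r1) ^ 6 = 1 := Subtype.ext gen0_mul_gen1_pow_six
  have p12 : (r1 * r2) ^ 6 = 1 := Subtype.ext (gen1_mul_gen2_pow_six hκ)
  have flip : ∀ {a b : sumZero k κ} {m : ℕ}, a * a = 1 → b * b = 1 → (a * b) ^ m = 1 →
      (b * a) ^ m = 1 := by
    intro a b m ha hb h
    rw [← inv_eq_one, ← inv_pow, mul_inv_rev, inv_eq_of_mul_eq_one_left ha,
      inv_eq_of_mul_eq_one_left hb, h]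
  have htop : Subgroup.closure {r0, r1, r2} = ⊤ := by
    apply Subgroup.map_injective (sumZero k κ).subtype_injective
    rw [MonoidHom.map_closure, ← MonoidHom.range_eq_map, Subgroup.range_subtype]
    refine Eq.trans ?_ (closure_gens hκ)
    simp [Set.image_insert_eq, r0, r1, r2]
  have ord2 : ∀ {x : sumZero k κ}, x ^ 2 = 1 → f x ≠ 1 → orderOf x = 2 := fun h h' =>
    orderOf_eq_prime h fun hx => h' (by rw [hx, map_one])
  have ord6 : ∀ {x : sumZero k κ}, x ^ 6 = 1 → f x ^ 2 ≠ 1 → f x ^ 3 ≠ 1 → orderOf x = 6 := by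
    intro x h h2 h3
    refine orderOf_eq_of_pow_and_pow_div_prime (by norm_num) h fun p hp hd => ?_
    have : p = 2 ∨ p = 3 := by
      rw [show 6 = 2 * 3 from rfl, hp.dvd_mul, Nat.prime_dvd_prime_iff_eq hp Nat.prime_two,
        Nat.prime_dvd_prime_iff_eq hp Nat.prime_three] at hd
      exact hd
    rcases this with rfl | rfl
    · exact fun hx => h3 (by rw [← map_pow, show x ^ 3 = 1 from hx, map_one])
    · exact fun hx => h2 (by rw [← map_pow, show x ^ 2 = 1 from hx, map_one])
  have hne : r0 ≠ r1 := by
    refine fun h => absurd (congrArg f h) ?_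
    rw [f0, f1]
    decide +kernel
  have hcard : Nat.card (sumZero k κ) = 3 * 2 ^ n := (card_sumZero k κ).trans hn
  refine ⟨sumZero k κ, inferInstance, r0, r1, r2, Nat.finite_of_card_ne_zero (by simp [hcard]),
    hcard, htop, ord2 (by rw [sq, q0]) ?_, ord2 (by rw [sq, q1]) ?_, ord2 (by rw [sq, q2]) ?_,
    ord2 p02 ?_, ord6 p01 ?_ ?_, ord6 p12 ?_ ?_, interProp_of_pairs q0 q1 hne htop
    (closure_pair_inf_le f q0 q1 q2 p01 p02 ?_)
    (closure_pair_inf_le f q1 q0 q2 (flip q0 q1 p01) p12 ?_)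
    (closure_pair_inf_le f q2 q0 q1 (flip q0 q2 p02) (flip q1 q2 p12) ?_)⟩
  all_goals
    simp only [map_mul, f0, f1, f2]
    decide +kernel

end TwistedAffine

/-- Corollary 5.2: for every `n ≥ 5` there is a regular 3-polytope of order `3 · 2^n`
with Schläfli type `{6, 6}`. -/
theorem stmt_15 (n : ℕ) (hn : 5 ≤ n) :
    ∃ (G : Type) (inst : Group G) (ρ0 ρ1 ρ2 : G),
      Finite G ∧ @IsType66StringC n G inst ρ0 ρ1 ρ2 := by
  obtain ⟨j, rfl | rfl⟩ : ∃ j, n = 2 * j + 5 ∨ n = 2 * j + 6 :=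
    ⟨(n - 5) / 2, by omega⟩
  · refine TwistedAffine.exists_isType66StringC (k := 2 ^ j) (κ := (0 : ZMod 2 →+ Unit))
      (fun _ => ⟨0, rfl⟩) ?_
    rw [Nat.card_unique]
    ring
  · refine TwistedAffine.exists_isType66StringC (k := 2 ^ j) (κ := AddMonoidHom.id (ZMod 2))
      Function.surjective_id ?_
    rw [Nat.card_zmod]
    ring
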